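/- In the logic PL^S₀, the formula ¬¬(A ⊃ B) ⇔ ¬(A ∧ ¬B) is not derivable for some (in fact, for propositional-variable) formulae A and B; consequently the strong equivalence ¬(A ⊃ B) ⇔ₛ (A ∧ ¬B) is not derivable. -/

import Mathlib

/-!  Deep embedding of the many-sorted paraconsistent logic `PL^S₀`
(a many-sorted version of López-Escobar's refutability calculus).

Formulae are built from atomic formulae (a predicate symbol applied to a list
of sorted individual variables) using implication `⊃`, conjunction `∧`,
disjunction `∨`, a primitive negation `¬`, and sorted quantifiers `∀`, `∃`.
Each variable carries a fixed sort given by a map `sortOf : V → S`;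
terms are just variables (no function symbols).  -/

inductive PLS0.Formula (S V P : Type) : Type
  | atom : P → List V → PLS0.Formula S V P
  | impl : PLS0.Formula S V P → PLS0.Formula S V P → PLS0.Formula S V P
  | conj : PLS0.Formula S V P → PLS0.Formula S V P → PLS0.Formula S V P
  | disj : PLS0.Formula S V P → PLS0.Formula S V P → PLS0.Formula S V P
  | neg  : PLS0.Formula S V P → PLS0.Formula S V P
  | all  : V → PLS0.Formula S V P → PLS0.Formula S V P
  | ex   : V → PLS0.Formula S V P → PLS0.Formula S V P

namespace PLS0

variable {S V P : Type} [DecidableEq V]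

/-- Free variables of a formula. -/
def Formula.free : Formula S V P → Set V
  | .atom _ args => {v | v ∈ args}
  | .impl A B => A.free ∪ B.free
  | .conj A B => A.free ∪ B.free
  | .disj A B => A.free ∪ B.free
  | .neg A => A.free
  | .all x A => A.free \ {x}
  | .ex x A => A.free \ {x}

/-- Bound variables of a formula. -/
def Formula.bound : Formula S V P → Set V
  | .atom _ _ => ∅
  | .impl A B => A.bound ∪ B.bound
  | .conj A B => A.bound ∪ B.bound
  | .disj A B => A.bound ∪ B.bound
  | .neg A => A.bound
  | .all x A => insert x A.bound
  | .ex x A => insert x A.bound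

/-- `A.subst x y` replaces the free occurrences of the variable `x` by the
variable `y` in `A`. -/
def Formula.subst (x y : V) : Formula S V P → Formula S V P
  | .atom p args => .atom p (args.map fun v => if v = x then y else v)
  | .impl A B => .impl (A.subst x y) (B.subst x y)
  | .conj A B => .conj (A.subst x y) (B.subst x y)
  | .disj A B => .disj (A.subst x y) (B.subst x y)
  | .neg A => .neg (A.subst x y)
  | .all z A => if z = x then .all z A else .all z (A.subst x y)
  | .ex z A => if z = x then .ex z A else .ex z (A.subst x y)

/-- Natural-deduction derivability `Γ ⊢ A` in `PL^S₀`.  The rules for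
`⊃, ∧, ∨, ∀, ∃` are the intuitionistic ones; the primitive negation is
governed by introduction/elimination rules for the negation of each
connective: `¬(A⊃B)` has the rules of `A∧¬B`, `¬(A∧B)` those of `¬A∨¬B`,
`¬(A∨B)` those of `¬A∧¬B`, `¬∀x A` those of `∃x ¬A`, `¬∃x A` those of
`∀x ¬A`, and `¬¬A` those of `A`. -/
inductive Deriv (sortOf : V → S) : Set (Formula S V P) → Formula S V P → Prop
  | ax {Γ A} : A ∈ Γ → Deriv sortOf Γ A
  -- implication
  | implI {Γ A B} : Deriv sortOf (insert A Γ) B → Deriv sortOf Γ (.impl A B)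
  | implE {Γ A B} : Deriv sortOf Γ (.impl A B) → Deriv sortOf Γ A → Deriv sortOf Γ B
  -- conjunction
  | conjI {Γ A B} : Deriv sortOf Γ A → Deriv sortOf Γ B → Deriv sortOf Γ (.conj A B)
  | conjE1 {Γ A B} : Deriv sortOf Γ (.conj A B) → Deriv sortOf Γ A
  | conjE2 {Γ A B} : Deriv sortOf Γ (.conj A B) → Deriv sortOf Γ B
  -- disjunction
  | disjI1 {Γ A B} : Deriv sortOf Γ A → Deriv sortOf Γ (.disj A B)
  | disjI2 {Γ A B} : Deriv sortOf Γ B → Deriv sortOf Γ (.disj A B)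
  | disjE {Γ A B C} : Deriv sortOf Γ (.disj A B) → Deriv sortOf (insert A Γ) C →
      Deriv sortOf (insert B Γ) C → Deriv sortOf Γ C
  -- universal quantifier
  | allI {Γ x A} : Deriv sortOf Γ A → (∀ C ∈ Γ, x ∉ Formula.free C) →
      Deriv sortOf Γ (.all x A)
  | allE {Γ x y A} : Deriv sortOf Γ (.all x A) → sortOf y = sortOf x →
      y ∉ Formula.bound A → Deriv sortOf Γ (A.subst x y)
  -- existential quantifier
  | exI {Γ x y A} : Deriv sortOf Γ (A.subst x y) → sortOf y = sortOf x →
      y ∉ Formula.bound A → Deriv sortOf Γ (.ex x A)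
  | exE {Γ x A C} : Deriv sortOf Γ (.ex x A) → Deriv sortOf (insert A Γ) C →
      (∀ D ∈ Γ, x ∉ Formula.free D) → x ∉ Formula.free C → Deriv sortOf Γ C
  -- negated implication (rules of `A ∧ ¬B`)
  | negImplI {Γ A B} : Deriv sortOf Γ A → Deriv sortOf Γ (.neg B) →
      Deriv sortOf Γ (.neg (.impl A B))
  | negImplE1 {Γ A B} : Deriv sortOf Γ (.neg (.impl A B)) → Deriv sortOf Γ A
  | negImplE2 {Γ A B} : Deriv sortOf Γ (.neg (.impl A B)) → Deriv sortOf Γ (.neg B)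
  -- negated conjunction (rules of `¬A ∨ ¬B`)
  | negConjI1 {Γ A B} : Deriv sortOf Γ (.neg A) → Deriv sortOf Γ (.neg (.conj A B))
  | negConjI2 {Γ A B} : Deriv sortOf Γ (.neg B) → Deriv sortOf Γ (.neg (.conj A B))
  | negConjE {Γ A B C} : Deriv sortOf Γ (.neg (.conj A B)) →
      Deriv sortOf (insert (.neg A) Γ) C → Deriv sortOf (insert (.neg B) Γ) C →
      Deriv sortOf Γ C
  -- negated disjunction (rules of `¬A ∧ ¬B`)
  | negDisjI {Γ A B} : Deriv sortOf Γ (.neg A) → Deriv sortOf Γ (.neg B) →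
      Deriv sortOf Γ (.neg (.disj A B))
  | negDisjE1 {Γ A B} : Deriv sortOf Γ (.neg (.disj A B)) → Deriv sortOf Γ (.neg A)
  | negDisjE2 {Γ A B} : Deriv sortOf Γ (.neg (.disj A B)) → Deriv sortOf Γ (.neg B)
  -- negated universal (rules of `∃x ¬A`)
  | negAllI {Γ x y A} : Deriv sortOf Γ (.neg (A.subst x y)) → sortOf y = sortOf x →
      y ∉ Formula.bound A → Deriv sortOf Γ (.neg (.all x A))
  | negAllE {Γ x A C} : Deriv sortOf Γ (.neg (.all x A)) →
      Deriv sortOf (insert (.neg A) Γ) C → (∀ D ∈ Γ, x ∉ Formula.free D) →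
      x ∉ Formula.free C → Deriv sortOf Γ C
  -- negated existential (rules of `∀x ¬A`)
  | negExI {Γ x A} : Deriv sortOf Γ (.neg A) → (∀ C ∈ Γ, x ∉ Formula.free C) →
      Deriv sortOf Γ (.neg (.ex x A))
  | negExE {Γ x y A} : Deriv sortOf Γ (.neg (.ex x A)) → sortOf y = sortOf x →
      y ∉ Formula.bound A → Deriv sortOf Γ (.neg (A.subst x y))
  -- double negation (rules of `A`)
  | negNegI {Γ A} : Deriv sortOf Γ A → Deriv sortOf Γ (.neg (.neg A))
  | negNegE {Γ A} : Deriv sortOf Γ (.neg (.neg A)) → Deriv sortOf Γ A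

/-- Equivalence: `A ⇔ B := (A ⊃ B) ∧ (B ⊃ A)`. -/
def Formula.equiv (A B : Formula S V P) : Formula S V P :=
  .conj (.impl A B) (.impl B A)

/-- Strong equivalence: `A ⇔ₛ B := (A ⇔ B) ∧ (¬A ⇔ ¬B)`. -/
def Formula.sequiv (A B : Formula S V P) : Formula S V P :=
  .conj (A.equiv B) ((Formula.neg A).equiv (Formula.neg B))

end PLS0

namespace PLS0

/-- One-world semantics with all atoms neither verified nor refuted; `ev true` is
verification, `ev false` refutation; quantifiers range over a one-point domain. -/
def ev : Bool → Formula ℕ ℕ ℕ → Prop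
  | _, .atom _ _ => False
  | true, .impl A B => ev true A → ev true B
  | false, .impl A B => ev true A ∧ ev false B
  | true, .conj A B => ev true A ∧ ev true B
  | false, .conj A B => ev false A ∨ ev false B
  | true, .disj A B => ev true A ∨ ev true B
  | false, .disj A B => ev false A ∧ ev false B
  | true, .neg A => ev false A
  | false, .neg A => ev true A
  | b, .all _ A => ev b A
  | b, .ex _ A => ev b A

theorem ev_subst (x y : ℕ) (A : Formula ℕ ℕ ℕ) :
    ∀ b, ev b (A.subst x y) ↔ ev b A := by
  induction A with
  | all z A ih =>
    intro b
    by_cases h : z = x <;> cases b <;> simp [Formula.subst, h, ev, ih]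
  | ex z A ih =>
    intro b
    by_cases h : z = x <;> cases b <;> simp [Formula.subst, h, ev, ih]
  | _ => intro b; cases b <;> simp_all [Formula.subst, ev]

theorem ev_sound {Γ : Set (Formula ℕ ℕ ℕ)} {A : Formula ℕ ℕ ℕ}
    (h : Deriv (id : ℕ → ℕ) Γ A) : (∀ C ∈ Γ, ev true C) → ev true A := by
  induction h with
  | ax h => exact fun H => H _ h
  | _ =>
    intro H
    simp only [ev, ev_subst, Set.mem_insert_iff, forall_eq_or_imp] at *
    tauto

end PLS0

open PLS0 in
/-- In `PL^S₀` (with natural numbers as sorts, variables and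
predicate symbols), for distinct propositional variables `A = p` and `B = q`
(nullary atoms), the formula `¬¬(A ⊃ B) ⇔ ¬(A ∧ ¬B)` is not derivable;
consequently the strong equivalence `¬(A ⊃ B) ⇔ₛ (A ∧ ¬B)` is not
derivable. -/
theorem PLS0.neg_impl_not_sequiv (p q : ℕ) (hpq : p ≠ q) :
    ¬ Deriv (id : ℕ → ℕ) ∅
        ((Formula.neg (.neg (.impl (.atom p ([] : List ℕ)) (.atom q [])))).equiv
          (.neg (.conj (.atom p []) (.neg (.atom q []))))) ∧
    ¬ Deriv (id : ℕ → ℕ) ∅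
        ((Formula.neg (.impl (.atom p ([] : List ℕ)) (.atom q []))).sequiv
          (.conj (.atom p []) (.neg (.atom q [])))) := by
  constructor
  · intro h
    have := ev_sound h (by simp)
    simp [Formula.equiv, ev] at this
  · intro h
    have := ev_sound h (by simp)
    simp [Formula.sequiv, Formula.equiv, ev] at this
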